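/- Let Ω ⊂ ℝ^d be open bounded, q ∈ C¹(Ω̄) with 0 < c₀ ≤ q, and u ∈ H²(Ω) ∩ H₀¹(Ω) with −div(q∇u) = f in Ω. Let p be a function with p, p/q, and ∇(p/q) sufficiently regular (p ∈ H¹(Ω) ∩ L^∞(Ω)), and set φ = (p/q)·u ∈ H₀¹(Ω). Then ∫_Ω p ∇u·∇φ dx = (1/2) ∫_Ω (p/q)² (q|∇u|² + f u) dx. -/

import Mathlib

open MeasureTheory
open scoped RealInnerProductSpace

/-- Divergence of a vector field on Euclidean space. -/
noncomputable def ediv {d : ℕ}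
    (V : EuclideanSpace ℝ (Fin d) → EuclideanSpace ℝ (Fin d))
    (x : EuclideanSpace ℝ (Fin d)) : ℝ :=
  ∑ i, fderiv ℝ V x (EuclideanSpace.single i 1) i

/-! For `r = p / q`, `φ = r u` and a vector field `V`, the product rule gives
`div (r² u V) = 2 r V·∇φ - r² (V·∇u - u div V)`, and the identity is the case `V = q∇u`,
`div V = -f`, once the divergence of `r² u V` is known to integrate to zero. No regularity of `∂Ω`
is available for the divergence theorem. Instead, `u = 0` on `∂Ω` makes the extension of `r² u V` by
zero continuous, hence Lipschitz, on the whole space, where Rademacher's theorem and integration by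
parts for Lipschitz functions apply. -/

section ZeroExtension

open Metric Set
open scoped NNReal

variable {F : Type*} [NormedAddCommGroup F] [NormedSpace ℝ F]

lemma continuous_indicator_smul {X : Type*} [TopologicalSpace X] {Ω : Set X} {w : X → ℝ}
    {V : X → F} (hΩ : IsOpen Ω) (hw : Continuous (Ω.indicator w)) (hV : ContinuousOn V Ω)
    (hVb : Bornology.IsBounded (V '' Ω)) : Continuous (Ω.indicator fun x => w x • V x) := by
  have hsplit : (Ω.indicator fun x => w x • V x) =
      fun x => Ω.indicator w x • Ω.indicator V x := by
    ext x
    by_cases hx : x ∈ Ω <;> simp [hx]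
  rw [hsplit, continuous_iff_continuousAt]
  intro x
  by_cases hx : x ∈ Ω
  · refine hw.continuousAt.smul ((hV.continuousAt (hΩ.mem_nhds hx)).congr ?_)
    exact eqOn_indicator.symm.eventuallyEq_of_mem (hΩ.mem_nhds hx)
  · obtain ⟨C, hC⟩ := isBounded_iff_forall_norm_le.1 hVb
    have hbound (y : X) : ‖Ω.indicator V y‖ ≤ max C 0 := by
      by_cases hy : y ∈ Ω
      · simp [hy, hC _ (mem_image_of_mem V hy)]
      · simp [hy]
    have hlim := hw.tendsto x
    rw [indicator_of_notMem hx] at hlim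
    simpa [ContinuousAt, hx] using
      hlim.zero_smul_isBoundedUnder_le (Filter.isBoundedUnder_of ⟨_, hbound⟩)

variable {E : Type*} [NormedAddCommGroup E] [NormedSpace ℝ E] [ProperSpace E] {Ω : Set E}
  {W : E → F} {C : ℝ≥0}

lemma norm_le_mul_dist_of_nnnorm_fderiv_le (hΩ : IsOpen Ω) (hW : Continuous W)
    (hW0 : ∀ x ∉ Ω, W x = 0) (hd : DifferentiableOn ℝ W Ω)
    (hC : ∀ x ∈ Ω, ‖fderiv ℝ W x‖₊ ≤ C) (x : E) {z : E} (hz : z ∉ Ω) :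
    ‖W x‖ ≤ C * dist x z := by
  by_cases hx : x ∈ Ω
  swap
  · rw [hW0 x hx, norm_zero]
    positivity
  -- The segment from `x` to `z` may leave `Ω`, but the ball reaching up to a nearest point of `Ωᶜ`
  -- does not.
  obtain ⟨y, hyΩ, hxy⟩ := hΩ.isClosed_compl.exists_infDist_eq_dist ⟨z, hz⟩ x
  have hne : dist x y ≠ 0 := dist_ne_zero.2 fun h => hyΩ (h ▸ hx)
  have hball : ball x (dist x y) ⊆ Ω := hxy ▸ ball_infDist_compl_subset
  have hlip : LipschitzOnWith C W (ball x (dist x y)) :=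
    (convex_ball x _).lipschitzOnWith_of_nnnorm_fderiv_le
      (fun v hv => hd.differentiableAt (hΩ.mem_nhds (hball hv))) (fun v hv => hC v (hball hv))
  have hlip' := hlip.closure hW.continuousOn
  rw [closure_ball x hne] at hlip'
  calc ‖W x‖ = dist (W x) (W y) := by rw [hW0 y hyΩ, dist_zero_right]
    _ ≤ C * dist x y :=
      hlip'.dist_le_mul x (mem_closedBall_self dist_nonneg) y (dist_comm y x).le
    _ ≤ C * dist x z := by
      rw [← hxy]
      gcongr
      exact infDist_le_dist_of_mem hz

lemma lipschitzWith_of_nnnorm_fderiv_le_of_eq_zero (hΩ : IsOpen Ω) (hW : Continuous W)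
    (hW0 : ∀ x ∉ Ω, W x = 0) (hd : DifferentiableOn ℝ W Ω)
    (hC : ∀ x ∈ Ω, ‖fderiv ℝ W x‖₊ ≤ C) : LipschitzWith C W := by
  refine LipschitzWith.of_dist_le_mul fun x y => ?_
  by_cases hseg : segment ℝ x y ⊆ Ω
  · exact ((convex_segment x y).lipschitzOnWith_of_nnnorm_fderiv_le
      (fun v hv => hd.differentiableAt (hΩ.mem_nhds (hseg hv))) (fun v hv => hC v (hseg hv))
      ).dist_le_mul x (left_mem_segment ℝ x y) y (right_mem_segment ℝ x y)
  · obtain ⟨z, hz, hzΩ⟩ := not_subset.1 hseg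
    calc dist (W x) (W y) ≤ ‖W x‖ + ‖W y‖ := dist_le_norm_add_norm _ _
      _ ≤ C * dist x z + C * dist y z := add_le_add
        (norm_le_mul_dist_of_nnnorm_fderiv_le hΩ hW hW0 hd hC x hzΩ)
        (norm_le_mul_dist_of_nnnorm_fderiv_le hΩ hW hW0 hd hC y hzΩ)
      _ = C * dist x y := by
        rw [← mul_add, dist_comm y z, dist_add_dist_of_mem_segment hz]

end ZeroExtension

section UpToBoundary

open Filter Set
open scoped Topology ContDiff

variable {E F G : Type*} [NormedAddCommGroup E] [NormedSpace ℝ E]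
  [NormedAddCommGroup F] [NormedSpace ℝ F] [NormedAddCommGroup G] [NormedSpace ℝ G]

/-- The class `Cⁿ(Ω̄)`: near every point of `closure Ω`, the restriction `f|_Ω` extends to a
function which is `Cⁿ` within `closure Ω`. Unlike in `ContDiffOn ℝ n f (closure Ω)`, the values of
`f` off `Ω` are irrelevant, so that `fderiv` and `gradient`, which may take junk values on `∂Ω`, map
`Cⁿ⁺¹(Ω̄)` to `Cⁿ(Ω̄)`. -/
def ContDiffUpToBoundary (n : WithTop ℕ∞) (f : E → F) (Ω : Set E) : Prop :=
  ∀ x ∈ closure Ω, ∃ g : E → F, ContDiffWithinAt ℝ n g (closure Ω) x ∧ f =ᶠ[𝓝[Ω] x] g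

namespace ContDiffUpToBoundary

variable {Ω : Set E} {m n : WithTop ℕ∞} {f : E → F}

lemma of_contDiffOn (hf : ContDiffOn ℝ n f (closure Ω)) : ContDiffUpToBoundary n f Ω :=
  fun x hx => ⟨f, hf x hx, EventuallyEq.rfl⟩

lemma of_le (hf : ContDiffUpToBoundary n f Ω) (hmn : m ≤ n) : ContDiffUpToBoundary m f Ω :=
  fun x hx => let ⟨g, hg, hfg⟩ := hf x hx; ⟨g, hg.of_le hmn, hfg⟩

lemma comp {Φ : F → G} (hΦ : ContDiff ℝ n Φ) (hf : ContDiffUpToBoundary n f Ω) :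
    ContDiffUpToBoundary n (fun x => Φ (f x)) Ω := fun x hx =>
  let ⟨g, hg, hfg⟩ := hf x hx
  ⟨fun y => Φ (g y), hΦ.comp_contDiffWithinAt hg, hfg.fun_comp Φ⟩

lemma prodMk {g : E → G} (hf : ContDiffUpToBoundary n f Ω) (hg : ContDiffUpToBoundary n g Ω) :
    ContDiffUpToBoundary n (fun x => (f x, g x)) Ω := fun x hx =>
  let ⟨f', hf', hff'⟩ := hf x hx
  let ⟨g', hg', hgg'⟩ := hg x hx
  ⟨fun y => (f' y, g' y), hf'.prodMk hg', hff'.prodMk hgg'⟩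

lemma smul {s : E → ℝ} (hs : ContDiffUpToBoundary n s Ω) (hf : ContDiffUpToBoundary n f Ω) :
    ContDiffUpToBoundary n (fun x => s x • f x) Ω :=
  (hs.prodMk hf).comp contDiff_smul

lemma mul {s t : E → ℝ} (hs : ContDiffUpToBoundary n s Ω) (ht : ContDiffUpToBoundary n t Ω) :
    ContDiffUpToBoundary n (fun x => s x * t x) Ω :=
  hs.smul ht

lemma sub {g : E → F} (hf : ContDiffUpToBoundary n f Ω) (hg : ContDiffUpToBoundary n g Ω) :
    ContDiffUpToBoundary n (fun x => f x - g x) Ω :=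
  (hf.prodMk hg).comp (contDiff_fst.sub contDiff_snd)

protected lemma inner {H : Type*} [NormedAddCommGroup H] [InnerProductSpace ℝ H] {U V : E → H}
    (hU : ContDiffUpToBoundary n U Ω) (hV : ContDiffUpToBoundary n V Ω) :
    ContDiffUpToBoundary n (fun x => ⟪U x, V x⟫) Ω :=
  (hU.prodMk hV).comp contDiff_inner

lemma contDiffOn (hf : ContDiffUpToBoundary n f Ω) : ContDiffOn ℝ n f Ω := by
  intro x hx
  obtain ⟨g, hg, hfg⟩ := hf x (subset_closure hx)
  exact (hg.mono subset_closure).congr_of_eventuallyEq hfg (hfg.self_of_nhdsWithin hx)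

lemma differentiableAt (hf : ContDiffUpToBoundary n f Ω) (hΩ : IsOpen Ω) (hn : n ≠ 0) {x : E}
    (hx : x ∈ Ω) : DifferentiableAt ℝ f x :=
  (hf.contDiffOn.contDiffAt (hΩ.mem_nhds hx)).differentiableAt hn

protected lemma fderiv (hf : ContDiffUpToBoundary n f Ω) (hΩ : IsOpen Ω) (hmn : m + 1 ≤ n)
    (hm : m ≠ ∞) : ContDiffUpToBoundary m (fderiv ℝ f) Ω := by
  intro x hx
  obtain ⟨g, hg, hfg⟩ := hf x hx
  obtain ⟨u, hu, -, -, g', hg', hg'c⟩ :=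
    (contDiffWithinAt_succ_iff_hasFDerivWithinAt' hm).1 (hg.of_le hmn)
  rw [insert_eq_of_mem hx] at hu
  refine ⟨g', hg'c, ?_⟩
  filter_upwards [eventually_eventually_nhdsWithin.2 hfg, self_mem_nhdsWithin,
    nhdsWithin_mono x subset_closure hu] with y hfgy hyΩ hyu
  rw [hΩ.nhdsWithin_eq hyΩ] at hfgy
  have hgy : HasFDerivAt g (g' y) y :=
    (hg' y hyu).hasFDerivAt (mem_of_superset (hΩ.mem_nhds hyΩ) subset_closure)
  exact (hgy.congr_of_eventuallyEq hfgy).fderiv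

protected lemma gradient {H : Type*} [NormedAddCommGroup H] [InnerProductSpace ℝ H]
    [CompleteSpace H] {Ω : Set H} {u : H → ℝ} (hu : ContDiffUpToBoundary n u Ω)
    (hΩ : IsOpen Ω) (hmn : m + 1 ≤ n) (hm : m ≠ ∞) : ContDiffUpToBoundary m (gradient u) Ω :=
  comp (Φ := (InnerProductSpace.toDual ℝ H).symm) (LinearIsometryEquiv.contDiff _)
    (hu.fderiv hΩ hmn hm)

protected lemma ediv {d : ℕ} {Ω : Set (EuclideanSpace ℝ (Fin d))}
    {V : EuclideanSpace ℝ (Fin d) → EuclideanSpace ℝ (Fin d)} (hV : ContDiffUpToBoundary n V Ω)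
    (hΩ : IsOpen Ω) (hmn : m + 1 ≤ n) (hm : m ≠ ∞) : ContDiffUpToBoundary m (ediv V) Ω :=
  comp (Φ := fun L : EuclideanSpace ℝ (Fin d) →L[ℝ] EuclideanSpace ℝ (Fin d) =>
    ∑ i, L (EuclideanSpace.single i 1) i) (by fun_prop) (hV.fderiv hΩ hmn hm)

lemma isBounded_image [ProperSpace E] (hf : ContDiffUpToBoundary n f Ω)
    (hΩ : Bornology.IsBounded Ω) : Bornology.IsBounded (f '' Ω) := by
  suffices h : Bornology.IsBounded (f '' (closure Ω ∩ Ω)) by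
    rwa [inter_eq_right.2 subset_closure] at h
  refine hΩ.isCompact_closure.induction_on (p := fun s => Bornology.IsBounded (f '' (s ∩ Ω)))
    (by simp) (fun s t hst ht => ht.subset (by gcongr)) (fun s t hs ht => ?_) fun x hx => ?_
  · rw [union_inter_distrib_right, image_union]
    exact hs.union ht
  · obtain ⟨g, hg, hfg⟩ := hf x hx
    have hlim : Tendsto f (𝓝[Ω] x) (𝓝 (g x)) :=
      (hg.continuousWithinAt.mono subset_closure).congr' hfg.symm
    have hball := hlim (Metric.ball_mem_nhds (g x) one_pos)
    obtain ⟨t, ht, htball⟩ := mem_nhdsWithin_iff_exists_mem_nhds_inter.1 hball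
    exact ⟨t, mem_nhdsWithin_of_mem_nhds ht,
      Metric.isBounded_ball.subset (image_subset_iff.2 htball)⟩

lemma integrableOn [ProperSpace E] [MeasurableSpace E] [BorelSpace E] {μ : Measure E}
    [IsFiniteMeasureOnCompacts μ] (hf : ContDiffUpToBoundary n f Ω) (hΩ : IsOpen Ω)
    (hΩb : Bornology.IsBounded Ω) : IntegrableOn f Ω μ := by
  obtain ⟨C, hC⟩ := isBounded_iff_forall_norm_le.1 (hf.isBounded_image hΩb)
  exact .of_bound hΩb.measure_lt_top
    (hf.contDiffOn.continuousOn.aestronglyMeasurable hΩ.measurableSet) C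
    (ae_restrict_of_forall_mem hΩ.measurableSet fun x hx => hC _ (mem_image_of_mem f hx))

end ContDiffUpToBoundary

end UpToBoundary

section LipschitzIntegrals

open Set
open scoped NNReal

variable {E : Type*} [NormedAddCommGroup E] [NormedSpace ℝ E] [FiniteDimensional ℝ E]
  [MeasurableSpace E] [BorelSpace E] {μ : Measure E} [μ.IsAddHaarMeasure]

lemma fderiv_ae_eq_zero_of_eqOn_const {f : E → E} {s : Set E} {c : E} (hs : MeasurableSet s)
    (hf : ∀ x ∈ s, f x = c) : ∀ᵐ x ∂μ, x ∈ s → fderiv ℝ f x = 0 := by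
  have hsd : MeasurableSet (s ∩ {x | DifferentiableAt ℝ f x}) :=
    hs.inter (measurableSet_of_differentiableAt ℝ f)
  have happrox : ApproximatesLinearOn f (0 : E →L[ℝ] E) (s ∩ {x | DifferentiableAt ℝ f x}) 0 :=
    fun x hx y hy => by simp [hf x hx.1, hf y hy.1]
  have hae := happrox.norm_fderiv_sub_le μ hsd (fderiv ℝ f)
    fun x hx => hx.2.hasFDerivAt.hasFDerivWithinAt
  rw [ae_restrict_iff' hsd] at hae
  filter_upwards [hae] with x hx hxs
  by_cases hd : DifferentiableAt ℝ f x
  · simpa using hx ⟨hxs, hd⟩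
  · exact fderiv_zero_of_not_differentiableAt hd

lemma integral_lineDeriv_eq_zero {f : E → ℝ} {K : ℝ≥0} (hf : LipschitzWith K f)
    (hfc : HasCompactSupport f) (v : E) : ∫ x, lineDeriv ℝ f x v ∂μ = 0 := by
  have hparts := (LipschitzWith.const (1 : ℝ)).integral_lineDeriv_mul_eq (μ := μ) hf hfc (-v)
  simpa [lineDeriv] using hparts.symm

end LipschitzIntegrals

section Divergence

open Set
open scoped NNReal

variable {d : ℕ} {Ω : Set (EuclideanSpace ℝ (Fin d))} {s r u : EuclideanSpace ℝ (Fin d) → ℝ}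
  {V W : EuclideanSpace ℝ (Fin d) → EuclideanSpace ℝ (Fin d)} {x : EuclideanSpace ℝ (Fin d)}

lemma ediv_smul (hs : DifferentiableAt ℝ s x) (hV : DifferentiableAt ℝ V x) :
    ediv (fun y => s y • V y) x = s x * ediv V x + ⟪gradient s x, V x⟫ := by
  have hVx : V x = ∑ i, V x i • EuclideanSpace.single i (1 : ℝ) := by
    simpa using ((EuclideanSpace.basisFun (Fin d) ℝ).sum_repr (V x)).symm
  rw [inner_gradient_left, hVx, map_sum]
  simp only [ediv, fderiv_fun_smul hs hV, map_smul, Finset.mul_sum]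
  rw [← Finset.sum_add_distrib]
  exact Finset.sum_congr rfl fun i _ => by simp [mul_comm]

lemma lineDeriv_apply_eq_fderiv_apply (hW : DifferentiableAt ℝ W x) (i : Fin d)
    (v : EuclideanSpace ℝ (Fin d)) :
    lineDeriv ℝ (fun y => W y i) x v = fderiv ℝ W x v i :=
  (((EuclideanSpace.proj (𝕜 := ℝ) i).hasFDerivAt.comp x hW.hasFDerivAt).hasLineDerivAt v).lineDeriv

lemma setIntegral_ediv_eq_zero_of_lipschitzWith {K : ℝ≥0} (hΩ : MeasurableSet Ω)
    (hΩb : Bornology.IsBounded Ω) (hW : LipschitzWith K W) (hW0 : ∀ x ∉ Ω, W x = 0) :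
    ∫ x in Ω, ediv W x = 0 := by
  have hlip (i : Fin d) : LipschitzWith K fun x => W x i :=
    LipschitzWith.of_dist_le_mul fun x y =>
      (PiLp.dist_apply_le (W x) (W y) i).trans (hW.dist_le_mul x y)
  have hsupp (i : Fin d) : HasCompactSupport fun x => W x i :=
    HasCompactSupport.intro hΩb.isCompact_closure fun x hx => by
      simp [hW0 x fun h => hx (subset_closure h)]
  have hderiv : ∀ᵐ x, ∀ i : Fin d, lineDeriv ℝ (fun y => W y i) x (EuclideanSpace.single i 1) =
      fderiv ℝ W x (EuclideanSpace.single i 1) i := by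
    filter_upwards [hW.ae_differentiableAt] with x hx i
    exact lineDeriv_apply_eq_fderiv_apply hx i _
  -- `∂Ω` may have positive measure, so differentiating `W = 0` on the exterior is not enough.
  have hoff : ∀ᵐ x, x ∉ Ω → fderiv ℝ W x = 0 := fderiv_ae_eq_zero_of_eqOn_const hΩ.compl hW0
  have : IsFiniteMeasure (volume.restrict Ω) := ⟨by simpa using hΩb.measure_lt_top⟩
  calc ∫ x in Ω, ediv W x
      = ∫ x in Ω, ∑ i, lineDeriv ℝ (fun y => W y i) x (EuclideanSpace.single i 1) :=
        integral_congr_ae <| ae_restrict_of_ae <| hderiv.mono fun x hx =>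
          (Finset.sum_congr rfl fun i _ => hx i).symm
    _ = ∑ i, ∫ x in Ω, lineDeriv ℝ (fun y => W y i) x (EuclideanSpace.single i 1) :=
        integral_finsetSum _ fun i _ => ((hlip i).memLp_lineDeriv _).integrable le_top
    _ = ∑ i, ∫ x, lineDeriv ℝ (fun y => W y i) x (EuclideanSpace.single i 1) :=
        Finset.sum_congr rfl fun i _ => setIntegral_eq_integral_of_ae_compl_eq_zero <| by
          filter_upwards [hderiv, hoff] with x hx hx0 hxΩ
          simp [hx i, hx0 hxΩ]
    _ = 0 := Finset.sum_eq_zero fun i _ => integral_lineDeriv_eq_zero (hlip i) (hsupp i) _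

theorem setIntegral_ediv_smul_eq_zero (hΩ : IsOpen Ω) (hΩb : Bornology.IsBounded Ω)
    (hu : ContDiffUpToBoundary 1 u Ω) (hu0 : Continuous (Ω.indicator u))
    (hV : ContDiffUpToBoundary 1 V Ω) : ∫ x in Ω, ediv (fun y => u y • V y) x = 0 := by
  set W := Ω.indicator fun y => u y • V y
  have huV := hu.smul hV
  have hWeq {x} (hx : x ∈ Ω) : W =ᶠ[nhds x] fun y => u y • V y :=
    eqOn_indicator.eventuallyEq_of_mem (hΩ.mem_nhds hx)
  have hW0 (x) (hx : x ∉ Ω) : W x = 0 := indicator_of_notMem hx _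
  have hWc : Continuous W :=
    continuous_indicator_smul hΩ hu0 hV.contDiffOn.continuousOn (hV.isBounded_image hΩb)
  have hWd : DifferentiableOn ℝ W Ω := fun x hx =>
    ((hWeq hx).differentiableAt_iff.2
      (huV.differentiableAt hΩ one_ne_zero hx)).differentiableWithinAt
  obtain ⟨C, hC⟩ := isBounded_iff_forall_norm_le.1
    ((huV.fderiv (m := 0) hΩ (by simp) (by simp)).isBounded_image hΩb)
  have hlip : LipschitzWith C.toNNReal W :=
    lipschitzWith_of_nnnorm_fderiv_le_of_eq_zero hΩ hWc hW0 hWd fun x hx => by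
      rw [(hWeq hx).fderiv_eq]
      exact NNReal.le_toNNReal_of_coe_le (hC _ (mem_image_of_mem _ hx))
  rw [← setIntegral_ediv_eq_zero_of_lipschitzWith hΩ.measurableSet hΩb hlip hW0]
  refine setIntegral_congr_fun hΩ.measurableSet fun x hx => ?_
  simp only [ediv, (hWeq hx).fderiv_eq]

lemma gradient_mul {H : Type*} [NormedAddCommGroup H] [InnerProductSpace ℝ H] [CompleteSpace H]
    {s t : H → ℝ} {x : H} (hs : DifferentiableAt ℝ s x) (ht : DifferentiableAt ℝ t x) :
    gradient (fun y => s y * t y) x = s x • gradient t x + t x • gradient s x := by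
  simp [gradient, fderiv_fun_mul hs ht]

lemma ediv_smul_smul_smul (hr : DifferentiableAt ℝ r x) (hu : DifferentiableAt ℝ u x)
    (hV : DifferentiableAt ℝ V x) :
    ediv (fun y => u y • r y • r y • V y) x =
      2 * (r x * ⟪V x, gradient (fun y => r y * u y) x⟫) -
        r x ^ 2 * (⟪V x, gradient u x⟫ - u x * ediv V x) := by
  rw [ediv_smul hu (hr.fun_smul (hr.fun_smul hV)), ediv_smul hr (hr.fun_smul hV), ediv_smul hr hV,
    gradient_mul hr hu]
  simp only [inner_add_right, real_inner_smul_right, real_inner_comm (V x)]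
  ring

theorem setIntegral_mul_inner_gradient_mul (hΩ : IsOpen Ω) (hΩb : Bornology.IsBounded Ω)
    (hr : ContDiffUpToBoundary 1 r Ω) (hu : ContDiffUpToBoundary 1 u Ω)
    (hu0 : Continuous (Ω.indicator u)) (hV : ContDiffUpToBoundary 1 V Ω) :
    ∫ x in Ω, r x * ⟪V x, gradient (fun y => r y * u y) x⟫ =
      (1 / 2) * ∫ x in Ω, r x ^ 2 * (⟪V x, gradient u x⟫ - u x * ediv V x) := by
  have h01 : (0 : WithTop ℕ∞) ≤ 1 := zero_le_one
  have hdiv := setIntegral_ediv_smul_eq_zero hΩ hΩb hu hu0 (hr.smul (hr.smul hV))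
  have hleft : IntegrableOn (fun x => r x * ⟪V x, gradient (fun y => r y * u y) x⟫) Ω :=
    ((hr.of_le h01).mul ((hV.of_le h01).inner
      ((hr.mul hu).gradient hΩ (by simp) (by simp)))).integrableOn hΩ hΩb
  have hright :
      IntegrableOn (fun x => r x ^ 2 * (⟪V x, gradient u x⟫ - u x * ediv V x)) Ω := by
    refine ContDiffUpToBoundary.integrableOn (n := 0) (.mul ?_ (.sub ?_ ?_)) hΩ hΩb
    · exact (hr.of_le h01).comp (contDiff_id.pow 2)
    · exact (hV.of_le h01).inner (hu.gradient hΩ (by simp) (by simp))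
    · exact (hu.of_le h01).mul (hV.ediv hΩ (by simp) (by simp))
  rw [setIntegral_congr_fun hΩ.measurableSet fun x hx => ediv_smul_smul_smul
      (hr.differentiableAt hΩ one_ne_zero hx) (hu.differentiableAt hΩ one_ne_zero hx)
      (hV.differentiableAt hΩ one_ne_zero hx),
    integral_sub (hleft.const_mul 2) hright, integral_const_mul] at hdiv
  linarith

end Divergence

theorem test_function_identity_general
    {d : ℕ} {Ω : Set (EuclideanSpace ℝ (Fin d))}
    (hΩ : IsOpen Ω) (hΩb : Bornology.IsBounded Ω)
    {q u p r f : EuclideanSpace ℝ (Fin d) → ℝ}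
    (hq : ContDiffOn ℝ 1 q (closure Ω))
    (hu : ContDiffOn ℝ 2 u (closure Ω))
    (hr : ContDiffOn ℝ 1 r (closure Ω))
    (hpr : ∀ x ∈ Ω, p x = r x * q x)
    (hu0 : ∀ x ∈ frontier Ω, u x = 0)
    (hpde : ∀ x ∈ Ω, -(ediv (fun y => q y • gradient u y) x) = f x) :
    (∫ x in Ω, p x * ⟪gradient u x, gradient (fun y => r y * u y) x⟫)
      = (1 / 2) * ∫ x in Ω, r x ^ 2 * (q x * ‖gradient u x‖ ^ 2 + f x * u x) := by
  have hu' : ContDiffUpToBoundary 2 u Ω := .of_contDiffOn hu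
  have hflux : ContDiffUpToBoundary 1 (fun x => q x • gradient u x) Ω :=
    (ContDiffUpToBoundary.of_contDiffOn hq).smul
      (hu'.gradient hΩ one_add_one_eq_two.le (by simp))
  have hr' : ContDiffUpToBoundary 1 r Ω := .of_contDiffOn hr
  calc ∫ x in Ω, p x * ⟪gradient u x, gradient (fun y => r y * u y) x⟫
      = ∫ x in Ω, r x * ⟪q x • gradient u x, gradient (fun y => r y * u y) x⟫ := by
        refine setIntegral_congr_fun hΩ.measurableSet fun x hx => ?_
        simp only [real_inner_smul_left, hpr x hx, mul_assoc]
    _ = (1 / 2) * ∫ x in Ω, r x ^ 2 * (⟪q x • gradient u x, gradient u x⟫ -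
          u x * ediv (fun y => q y • gradient u y) x) :=
        setIntegral_mul_inner_gradient_mul hΩ hΩb hr' (hu'.of_le one_le_two)
          (continuous_indicator hu0 hu.continuousOn) hflux
    _ = (1 / 2) * ∫ x in Ω, r x ^ 2 * (q x * ‖gradient u x‖ ^ 2 + f x * u x) := by
        congr 1
        refine setIntegral_congr_fun hΩ.measurableSet fun x hx => ?_
        simp only [real_inner_smul_left, real_inner_self_eq_norm_sq, ← hpde x hx]
        ring

/-- Key algebraic identity (proof of Theorem 3.2): if `−div(q∇u) = f` in `Ω` and
`u` vanishes on `∂Ω`, then with the test function `φ = (p/q)·u`,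
`∫_Ω p ∇u·∇φ = ½ ∫_Ω (p/q)² (q|∇u|² + f u)`. -/
theorem test_function_identity
    {d : ℕ} (Ω : Set (EuclideanSpace ℝ (Fin d)))
    (hΩ : IsOpen Ω) (hΩb : Bornology.IsBounded Ω)
    (q u p f : EuclideanSpace ℝ (Fin d) → ℝ) (c₀ : ℝ) (hc₀ : 0 < c₀)
    -- regularity: `q ∈ C¹(Ω̄)`, `u ∈ C²` near `Ω̄`, `p ∈ H¹ ∩ L^∞`
    (hq : ContDiffOn ℝ 1 q (closure Ω))
    (hqpos : ∀ x ∈ closure Ω, c₀ ≤ q x)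
    (hu : ContDiffOn ℝ 2 u (closure Ω))
    (hp : ContDiffOn ℝ 1 p (closure Ω))
    (hpbd : ∃ K, ∀ x ∈ closure Ω, |p x| ≤ K)
    (hpH1 : IntegrableOn (fun x => ‖gradient p x‖ ^ 2) Ω volume)
    -- `u ∈ H₀¹(Ω)` : homogeneous Dirichlet boundary condition
    (hu0 : ∀ x ∈ frontier Ω, u x = 0)
    -- the elliptic equation `−div(q∇u) = f` in `Ω`
    (hpde : ∀ x ∈ Ω, -(ediv (fun y => q y • gradient u y) x) = f x) :
    (∫ x in Ω, p x * ⟪gradient u x, gradient (fun y => (p y / q y) * u y) x⟫)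
      = (1 / 2) * ∫ x in Ω,
          (p x / q x) ^ 2 * (q x * ‖gradient u x‖ ^ 2 + f x * u x) := by
  have hq0 : ∀ x ∈ closure Ω, q x ≠ 0 := fun x hx => (hc₀.trans_le (hqpos x hx)).ne'
  exact test_function_identity_general hΩ hΩb hq hu (hp.div hq hq0)
    (fun x hx => (div_mul_cancel₀ (p x) (hq0 x (subset_closure hx))).symm) hu0 hpde
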